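/- arXiv:2310.09654 — 2 statements merged into one kernel-verified Lean document; each statement's English description precedes it below -/
import Mathlib

section
/- Let N be a nonzero real number, let j ≥ 1 be an integer, let * be an element not in [j] = {1,…,j}, let σ be a set partition of [j] ∪ {*}, and let k ∈ [j]. Define b^σ_k := Σ (-1)^(|π|-1)·(|π|-1)!·(N − |B_π| + 1)/N, where the sum is over all coarsenings π of σ such that k and * lie in the same block of π, and B_π denotes that common block. Let Q be the block of σ containing k and R the block of σ containing *. Then: if |σ| = 1 then b^σ_k = (N−j)/N; if |σ| = 2 then b^σ_k = −(j+1−|Q|)/N when Q = R and b^σ_k = (N−j)/N when Q ≠ R; if |σ| = 3 then b^σ_k = 0 when Q = R and b^σ_k = −(j+1−|Q|−|R|)/N when Q ≠ R; and b^σ_k = 0 whenever |σ| ≥ 4. -/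
open scoped Classical

/-!
Colourings `f : α → β` with kernel exactly `r` are the injections of `α ⧸ r` into `β`. Sorting the
colourings that are constant on the classes of `t` by their kernel therefore gives
`∑_{r ≥ t} x(x - 1)⋯(x - |α ⧸ r| + 1) = x ^ |α ⧸ t|` for `x = |β|`, an identity of polynomials whose
coefficient of `x` reads `∑_{r ≥ t} (-1) ^ (|α ⧸ r| - 1) (|α ⧸ r| - 1)! = [t = ⊤]`.

The coarsenings of `σ` having `k` and `*` in a common block are the coarsenings of the partition
obtained from `σ` by merging `Q` and `R`, so that the constant part of the weight contributes only
if `Q` and `R` are the only blocks of `σ`. Writing `|B_π|` as a sum over `c ∈ B_π` means merging the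
block of `c` as well: the rest of the weight counts those `c` for which `Q`, `R` and the block of
`c` are all the blocks of `σ`.
-/

section Setoid

open Finset Polynomial

variable {α β : Type*}

/-- The value `μ(π, ⊤)` of the Möbius function of the lattice of partitions of a finite set, as a
function of the number `n` of blocks of `π`. -/
def partitionMoebius (n : ℕ) : ℤ :=
  (-1) ^ (n - 1) * (n - 1).factorial

theorem eval_zero_descPochhammer_comp_X_sub_one (n : ℕ) :
    ((descPochhammer ℤ n).comp (X - 1)).eval 0 = (-1) ^ n * n.factorial := by
  rw [eval_comp, eval_sub, eval_X, eval_one, zero_sub]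
  induction n with
  | zero => simp
  | succ n ih =>
    rw [descPochhammer_succ_eval, ih, Nat.factorial_succ]
    push_cast
    ring

theorem coeff_one_descPochhammer {n : ℕ} (hn : n ≠ 0) :
    (descPochhammer ℤ n).coeff 1 = partitionMoebius n := by
  obtain ⟨m, rfl⟩ := Nat.exists_eq_succ_of_ne_zero hn
  rw [descPochhammer_succ_left, coeff_X_mul, coeff_zero_eq_eval_zero,
    eval_zero_descPochhammer_comp_X_sub_one, partitionMoebius, Nat.succ_sub_one]

/-- Functions with kernel `r` correspond to injections of the quotient by `r`; this is how a
colouring determines, and is determined by, a partition with distinctly coloured blocks. -/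
def kerEqEquivEmbedding (r : Setoid α) (β : Type*) :
    {f : α → β // Setoid.ker f = r} ≃ (Quotient r ↪ β) where
  toFun f := ⟨Quotient.lift f.1 f.2.ge, (Setoid.lift_injective_iff_ker_eq_of_le _).2 f.2⟩
  invFun e := ⟨e ∘ Quotient.mk r, Setoid.ext fun _ _ => e.injective.eq_iff.trans Quotient.eq⟩
  left_inv _ := rfl
  right_inv _ := by ext ⟨_⟩; rfl

theorem card_filter_ker_eq [Fintype α] [Fintype β] (r : Setoid α) :
    #{f : α → β | Setoid.ker f = r} =
      (Fintype.card β).descFactorial (Fintype.card (Quotient r)) := by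
  rw [← Fintype.card_subtype, Fintype.card_congr (kerEqEquivEmbedding r β),
    Fintype.card_embedding_eq]

theorem card_filter_le_ker [Fintype α] [Fintype β] (t : Setoid α) :
    #{f : α → β | t ≤ Setoid.ker f} = Fintype.card β ^ Fintype.card (Quotient t) := by
  rw [← Fintype.card_subtype, Fintype.card_congr (Setoid.liftEquiv t), Fintype.card_fun]

/-- The finest equivalence relation coarser than `t` for which all elements of `T` are equivalent,
used to turn conditions on a common block into conditions on the order. -/
def mergeSetoid (t : Setoid α) (T : Set α) : Setoid α where
  r x y := t x y ∨ (∃ u ∈ T, t x u) ∧ ∃ v ∈ T, t y v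
  iseqv :=
    { refl := fun x => .inl (t.refl x)
      symm := Or.imp t.symm And.symm
      trans := by
        rintro x y z (hxy | ⟨hx, hy⟩) (hyz | ⟨hy', hz⟩)
        · exact .inl (t.trans hxy hyz)
        · exact .inr ⟨hy'.imp fun _ h => ⟨h.1, t.trans hxy h.2⟩, hz⟩
        · exact .inr ⟨hx, hy.imp fun _ h => ⟨h.1, t.trans (t.symm hyz) h.2⟩⟩
        · exact .inr ⟨hx, hz⟩ }

theorem mergeSetoid_le_iff {t r : Setoid α} {T : Set α} :
    mergeSetoid t T ≤ r ↔ t ≤ r ∧ ∀ u ∈ T, ∀ v ∈ T, r u v := by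
  constructor
  · exact fun h => ⟨fun _ _ hxy => h (.inl hxy),
      fun u hu v hv => h (.inr ⟨⟨u, hu, t.refl u⟩, v, hv, t.refl v⟩)⟩
  · rintro ⟨htr, hT⟩ x y (hxy | ⟨⟨u, hu, hxu⟩, v, hv, hyv⟩)
    · exact htr hxy
    · exact r.trans (htr hxu) (r.trans (hT u hu v hv) (r.symm (htr hyv)))

theorem mergeSetoid_eq_top_iff {t : Setoid α} {T : Set α} (hT : T.Nonempty) :
    mergeSetoid t T = ⊤ ↔ ∀ x, ∃ u ∈ T, t x u := by
  obtain ⟨u, hu⟩ := hT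
  rw [Setoid.eq_top_iff]
  exact ⟨fun h x => (h x u).elim (fun hxu => ⟨u, hu, hxu⟩) And.left,
    fun h x y => .inr ⟨h x, h y⟩⟩

variable [Fintype α] [Fintype (Setoid α)]

theorem sum_descFactorial_card_quotient [Fintype β] (t : Setoid α) :
    ∑ r with t ≤ r, (Fintype.card β).descFactorial (Fintype.card (Quotient r)) =
      Fintype.card β ^ Fintype.card (Quotient t) := by
  rw [← card_filter_le_ker, card_eq_sum_card_fiberwise (f := Setoid.ker) (t := {r | t ≤ r})
    fun f hf => by simpa using hf]
  refine sum_congr rfl fun r hr => ?_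
  rw [← card_filter_ker_eq, filter_filter]
  congr! 2 with f
  exact (and_iff_right_of_imp fun h => h ▸ (mem_filter.1 hr).2).symm

theorem sum_descPochhammer_card_quotient (t : Setoid α) :
    ∑ r with t ≤ r, descPochhammer ℤ (Fintype.card (Quotient r)) =
      X ^ Fintype.card (Quotient t) := by
  refine eq_of_infinite_eval_eq _ _
    ((Set.infinite_range_of_injective (Nat.cast_injective (R := ℤ))).mono ?_)
  rintro _ ⟨x, rfl⟩
  have h := congrArg (Nat.cast (R := ℤ)) (sum_descFactorial_card_quotient (β := Fin x) t)
  simpa [eval_finsetSum, descPochhammer_eval_eq_descFactorial] using h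

theorem sum_partitionMoebius_card_quotient [Nonempty α] (t : Setoid α) :
    ∑ r with t ≤ r, partitionMoebius (Fintype.card (Quotient r)) = if t = ⊤ then 1 else 0 := by
  have nonempty_quotient (r : Setoid α) : Nonempty (Quotient r) := .map (Quotient.mk r) ‹_›
  have card_eq_one : 1 = Fintype.card (Quotient t) ↔ t = ⊤ := by
    rw [eq_comm, ← Quotient.subsingleton_iff, ← Fintype.card_le_one_iff_subsingleton,
      le_antisymm_iff, and_iff_left (Nat.succ_le_of_lt Fintype.card_pos)]
  have h := congrArg (coeff · 1) (sum_descPochhammer_card_quotient t)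
  simpa only [finsetSum_coeff, coeff_X_pow, coeff_one_descPochhammer Fintype.card_ne_zero,
    card_eq_one] using h

end Setoid

section Finpartition

open Finset

variable {α : Type*} [DecidableEq α] {s : Finset α}

/-- The equivalence relation on `s` whose classes are the blocks of `π`. It identifies
`Finpartition s` with the complete lattice `Setoid s`, where suprema are available. -/
def partSetoid (π : Finpartition s) : Setoid s :=
  Setoid.ker fun x => π.part x

theorem partSetoid_iff_mem_part {π : Finpartition s} {x y : s} :
    partSetoid π x y ↔ (x : α) ∈ π.part y :=
  (π.mem_part_iff_part_eq_part x.2 y.2).symm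

theorem partSetoid_le_partSetoid_iff {σ π : Finpartition s} :
    partSetoid σ ≤ partSetoid π ↔ σ ≤ π := by
  constructor
  · intro h P hP
    obtain ⟨a, ha⟩ := σ.nonempty_of_mem_parts hP
    refine ⟨π.part a, π.part_mem.2 (σ.subset hP ha), fun b hb => ?_⟩
    have hab : partSetoid σ ⟨b, σ.subset hP hb⟩ ⟨a, σ.subset hP ha⟩ := by
      rwa [partSetoid_iff_mem_part, σ.part_eq_of_mem hP ha]
    exact partSetoid_iff_mem_part.1 (h hab)
  · intro h x y hxy
    obtain ⟨P, hP, hPy⟩ := h (σ.part_mem.2 y.2)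
    rw [partSetoid_iff_mem_part] at hxy ⊢
    exact π.mem_part_iff_exists.2 ⟨P, hP, hPy hxy, hPy (σ.mem_part y.2)⟩

theorem partSetoid_ofSetSetoid (r : Setoid α) :
    partSetoid (Finpartition.ofSetSetoid r s) = r.comap (↑) := by
  ext x y
  rw [partSetoid_iff_mem_part, Finpartition.mem_part_ofSetSetoid_iff_rel, r.comm']
  exact (and_iff_right y.2).trans (and_iff_right x.2)

theorem partSetoid_bijective : Function.Bijective (partSetoid (s := s)) := by
  constructor
  · exact fun σ π h => le_antisymm (partSetoid_le_partSetoid_iff.1 h.le)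
      (partSetoid_le_partSetoid_iff.1 h.ge)
  · intro t
    obtain ⟨r, rfl⟩ := Setoid.comap_surjective ((↑) : s → α) Subtype.val_injective t
    exact ⟨_, partSetoid_ofSetSetoid r⟩

theorem card_quotient_partSetoid (π : Finpartition s) :
    Fintype.card (Quotient (partSetoid π)) = #π.parts := by
  have range_part : Set.range (fun x : s => π.part x) = π.parts :=
    (Set.image_eq_range π.part s).symm.trans
      (π.part_surjOn.image_eq_of_mapsTo fun _ => π.part_mem.2)
  rw [← Fintype.card_coe π.parts]
  exact Fintype.card_congr ((Setoid.quotientKerEquivRange _).trans (.setCongr range_part))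

theorem sum_partitionMoebius_card_parts (hs : s.Nonempty) (t : Setoid s) :
    ∑ π with t ≤ partSetoid π, partitionMoebius #π.parts = if t = ⊤ then 1 else 0 := by
  have := hs.to_subtype
  let := Fintype.ofBijective partSetoid (partSetoid_bijective (s := s))
  rw [← sum_partitionMoebius_card_quotient, sum_filter, sum_filter,
    ← partSetoid_bijective.sum_comp]
  simp only [card_quotient_partSetoid]

theorem mergeSetoid_partSetoid_le_iff {σ π : Finpartition s} {T : Finset α} {a : α}
    (hT : T ⊆ s) (ha : a ∈ T) :
    mergeSetoid (partSetoid σ) {x | ↑x ∈ T} ≤ partSetoid π ↔ σ ≤ π ∧ T ⊆ π.part a := by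
  rw [mergeSetoid_le_iff, partSetoid_le_partSetoid_iff]
  refine and_congr_right fun _ => ⟨fun h b hb => ?_, fun h x hx y hy => ?_⟩
  · exact partSetoid_iff_mem_part.1 (h ⟨b, hT hb⟩ hb ⟨a, hT ha⟩ ha)
  · rw [partSetoid_iff_mem_part, π.part_eq_of_mem (π.part_mem.2 (hT ha)) (h hy)]
    exact h hx

theorem mergeSetoid_partSetoid_eq_top_iff {σ : Finpartition s} {T : Finset α}
    (hT : T ⊆ s) (hT' : T.Nonempty) :
    mergeSetoid (partSetoid σ) {x | ↑x ∈ T} = ⊤ ↔ T.image σ.part = σ.parts := by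
  have image_subset : T.image σ.part ⊆ σ.parts :=
    image_subset_iff.2 fun a ha => σ.part_mem.2 (hT ha)
  rw [mergeSetoid_eq_top_iff (hT'.elim fun a ha => ⟨⟨a, hT ha⟩, ha⟩),
    subset_antisymm_iff, and_iff_right image_subset]
  constructor
  · intro h P hP
    obtain ⟨b, hb, rfl⟩ := σ.part_surjOn hP
    obtain ⟨u, hu, hbu⟩ := h ⟨b, hb⟩
    exact mem_image.2 ⟨u, hu, hbu.symm⟩
  · intro h x
    obtain ⟨u, hu, hux⟩ := mem_image.1 (h (σ.part_mem.2 x.2))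
    exact ⟨⟨u, hT hu⟩, hu, hux.symm⟩

theorem sum_partitionMoebius_of_subset_part (σ : Finpartition s) {T : Finset α} {a : α}
    (hT : T ⊆ s) (ha : a ∈ T) :
    ∑ π with σ ≤ π ∧ T ⊆ π.part a, partitionMoebius #π.parts =
      if T.image σ.part = σ.parts then 1 else 0 := by
  simp only [← mergeSetoid_partSetoid_le_iff hT ha,
    ← mergeSetoid_partSetoid_eq_top_iff hT ⟨a, ha⟩]
  exact sum_partitionMoebius_card_parts ⟨a, hT ha⟩ _

theorem sum_partitionMoebius_mul_card_part (σ : Finpartition s) {T : Finset α} {a : α}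
    (hT : T ⊆ s) (ha : a ∈ T) :
    ∑ π with σ ≤ π ∧ T ⊆ π.part a, partitionMoebius #π.parts * #(π.part a) =
      #{c ∈ s | insert (σ.part c) (T.image σ.part) = σ.parts} := by
  have mul_card_part (π : Finpartition s) :
      partitionMoebius #π.parts * #(π.part a) =
        ∑ c ∈ s, if c ∈ π.part a then partitionMoebius #π.parts else 0 := by
    rw [← sum_filter, filter_mem_eq_inter, inter_eq_right.2 (π.part_subset a), sum_const,
      nsmul_eq_mul, mul_comm]
  calc ∑ π with σ ≤ π ∧ T ⊆ π.part a, partitionMoebius #π.parts * #(π.part a)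
    _ = ∑ c ∈ s, ∑ π with σ ≤ π ∧ insert c T ⊆ π.part a, partitionMoebius #π.parts := by
      simp only [mul_card_part]
      rw [sum_comm]
      simp only [← sum_filter, filter_filter, insert_subset_iff, and_assoc, and_comm (a := _ ∈ _)]
    _ = ∑ c ∈ s, if insert (σ.part c) (T.image σ.part) = σ.parts then 1 else 0 :=
      sum_congr rfl fun c hc => by
        rw [sum_partitionMoebius_of_subset_part σ (insert_subset hc hT) (mem_insert_of_mem ha),
          image_insert]
    _ = #{c ∈ s | insert (σ.part c) (T.image σ.part) = σ.parts} := by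
      rw [sum_boole]

theorem card_filter_part_mem (σ : Finpartition s) {U : Finset (Finset α)} (hU : U ⊆ σ.parts) :
    #{c ∈ s | σ.part c ∈ U} = ∑ P ∈ U, #P := by
  rw [card_eq_sum_card_fiberwise (f := σ.part) (t := U) fun c hc => by grind]
  refine sum_congr rfl fun P hP => congrArg card ?_
  ext c
  have := σ.part_eq_iff_mem (hU hP) (a := c)
  have : P ⊆ s := σ.subset (hU hP)
  grind

theorem card_filter_insert_part_eq (σ : Finpartition s) {U : Finset (Finset α)}
    (hU : U ⊆ σ.parts) :
    (#{c ∈ s | insert (σ.part c) U = σ.parts} : ℤ) =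
      if #σ.parts = #U then (#s : ℤ)
      else if #σ.parts = #U + 1 then #s - ∑ P ∈ U, (#P : ℤ) else 0 := by
  have card_insert (c : α) (h : insert (σ.part c) U = σ.parts) :
      σ.part c ∈ U ∧ #σ.parts = #U ∨ σ.part c ∉ U ∧ #σ.parts = #U + 1 := by
    grind
  split_ifs with h h'
  · obtain rfl := eq_of_subset_of_card_le hU h.le
    rw [filter_true_of_mem fun c hc => insert_eq_of_mem (σ.part_mem.2 hc)]
  · have insert_eq_iff : ∀ c ∈ s, insert (σ.part c) U = σ.parts ↔ σ.part c ∉ U := fun c hc =>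
      ⟨fun hins => by grind,
        fun hcU => eq_of_subset_of_card_le (insert_subset (σ.part_mem.2 hc) hU) (by grind)⟩
    rw [filter_congr insert_eq_iff, eq_sub_iff_add_eq, ← Nat.cast_sum, ← card_filter_part_mem σ hU,
      add_comm]
    exact_mod_cast card_filter_add_card_filter_not _
  · rw [filter_false_of_mem fun c _ hc => by grind]
    simp

theorem sum_partitionMoebius_mul_sub_card_part {R : Type*} [CommRing R] (x : R)
    (σ : Finpartition s) {T : Finset α} {a : α} (hT : T ⊆ s) (ha : a ∈ T) :
    ∑ π with σ ≤ π ∧ T ⊆ π.part a, (partitionMoebius #π.parts : R) * (x - #(π.part a)) =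
      if #σ.parts = #(T.image σ.part) then x - #s
      else if #σ.parts = #(T.image σ.part) + 1 then ∑ P ∈ T.image σ.part, (#P : R) - #s
      else 0 := by
  have hU : T.image σ.part ⊆ σ.parts := image_subset_iff.2 fun a ha => σ.part_mem.2 (hT ha)
  have image_eq_iff : T.image σ.part = σ.parts ↔ #σ.parts = #(T.image σ.part) :=
    ⟨fun h => by rw [h], fun h => eq_of_subset_of_card_le hU h.le⟩
  have hsum := congrArg (Int.cast (R := R)) (sum_partitionMoebius_of_subset_part σ hT ha)
  have hcard := congrArg (Int.cast (R := R)) ((sum_partitionMoebius_mul_card_part σ hT ha).trans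
    (card_filter_insert_part_eq σ hU))
  push_cast at hsum hcard
  simp only [mul_sub, sum_sub_distrib, ← sum_mul, hsum, hcard, image_eq_iff]
  split_ifs <;> simp

theorem sum_parts_filter_mem_mem {M : Type*} [AddCommMonoid M] (π : Finpartition s) {a b : α}
    (ha : a ∈ s) (f : Finset α → M) :
    ∑ B ∈ π.parts with a ∈ B ∧ b ∈ B, f B = if b ∈ π.part a then f (π.part a) else 0 := by
  have mem_iff : ∀ B ∈ π.parts, a ∈ B ∧ b ∈ B ↔ B = π.part a ∧ b ∈ π.part a := fun B hB => by
    rw [← π.part_eq_iff_mem hB, eq_comm]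
    exact and_congr_right fun h => by rw [h]
  rw [filter_congr mem_iff, sum_filter]
  simp [ite_and, π.part_mem.2 ha]

theorem sum_coarsenings_mem_part {K : Type*} [Field K] {N : K} (hN : N ≠ 0)
    (σ : Finpartition s) {a b : α} (ha : a ∈ s) (hb : b ∈ s) :
    (∑ π : Finpartition s, if σ ≤ π then ∑ B ∈ π.parts with a ∈ B ∧ b ∈ B,
        (-1 : K) ^ (#π.parts - 1) * ((#π.parts - 1).factorial : K) * ((N - #B + 1) / N) else 0) =
      (if #σ.parts = #{σ.part a, σ.part b} then N + 1 - #s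
        else if #σ.parts = #{σ.part a, σ.part b} + 1 then
          ∑ P ∈ {σ.part a, σ.part b}, (#P : K) - #s
        else 0) / N := by
  have hT : {a, b} ⊆ s := insert_subset ha (singleton_subset_iff.2 hb)
  have hsum := sum_partitionMoebius_mul_sub_card_part (N + 1) σ hT (mem_insert_self a _)
  rw [image_insert, image_singleton] at hsum
  rw [eq_div_iff hN, ← hsum, sum_mul, sum_filter]
  refine sum_congr rfl fun π _ => ?_
  simp only [sum_parts_filter_mem_mem π ha, insert_subset_iff, singleton_subset_iff,
    π.mem_part_self.2 ha, true_and, ite_and, ite_mul, zero_mul, partitionMoebius]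
  push_cast
  rw [mul_assoc, div_mul_cancel₀ _ hN, sub_add_eq_add_sub]

end Finpartition

theorem coefficient_b_formula_general {α K : Type*} [DecidableEq α] [Field K] (N : K) (hN : N ≠ 0)
    (s : Finset α) (j : ℕ) (hs : s.card = j + 1) (σ : Finpartition s) (k star : α)
    (Q R : Finset α) (hQ : Q ∈ σ.parts) (hkQ : k ∈ Q) (hR : R ∈ σ.parts) (hsR : star ∈ R)
    (b : K)
    (hb : b = ∑ π : Finpartition s,
      if σ ≤ π then
        ∑ B ∈ π.parts.filter (fun B => k ∈ B ∧ star ∈ B),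
          (-1 : K) ^ (π.parts.card - 1) * (Nat.factorial (π.parts.card - 1) : K) *
            ((N - (B.card : K) + 1) / N)
      else 0) :
    (σ.parts.card = 1 → b = (N - j) / N) ∧
    (σ.parts.card = 2 →
      (Q = R → b = -(((j : K) + 1 - Q.card) / N)) ∧ (Q ≠ R → b = (N - j) / N)) ∧
    (σ.parts.card = 3 →
      (Q = R → b = 0) ∧ (Q ≠ R → b = -(((j : K) + 1 - Q.card - R.card) / N))) ∧
    (4 ≤ σ.parts.card → b = 0) := by
  rw [sum_coarsenings_mem_part hN σ (σ.subset hQ hkQ) (σ.subset hR hsR), hs,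
    σ.part_eq_of_mem hQ hkQ, σ.part_eq_of_mem hR hsR, Nat.cast_add_one, add_sub_add_right_eq_sub]
    at hb
  rcases eq_or_ne Q R with rfl | hQR
  · rw [Finset.pair_eq_singleton, Finset.card_singleton, Finset.sum_singleton] at hb
    refine ⟨fun h => ?_, fun h => ⟨fun _ => ?_, absurd rfl⟩, fun h => ⟨fun _ => ?_, absurd rfl⟩,
      fun h => ?_⟩
    · rw [hb, if_pos h]
    · rw [hb, if_neg (by omega), if_pos h, ← neg_div, neg_sub]
    · rw [hb, if_neg (by omega), if_neg (by omega), zero_div]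
    · rw [hb, if_neg (by omega), if_neg (by omega), zero_div]
  · have two_le : 2 ≤ σ.parts.card := Finset.one_lt_card.2 ⟨Q, hQ, R, hR, hQR⟩
    rw [Finset.card_pair hQR, Finset.sum_pair hQR] at hb
    refine ⟨fun h => by omega, fun h => ⟨(absurd · hQR), fun _ => ?_⟩,
      fun h => ⟨(absurd · hQR), fun _ => ?_⟩, fun h => ?_⟩
    · rw [hb, if_pos h]
    · rw [hb, if_neg (by omega), if_pos h, ← neg_div, sub_sub, neg_sub]
    · rw [hb, if_neg (by omega), if_neg (by omega), zero_div]

/-- Computation of the coefficients `b^σ_k` in the cluster hierarchy: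
`b^σ_k` is the sum of `(-1)^(|π|-1)(|π|-1)!·(N − |B_π| + 1)/N` over all coarsenings `π`
of `σ` in which `k` and `*` lie in the same block `B_π`.  Here the common block sum is
realized by summing over the blocks of `π` containing both `k` and `*` (there is at most
one such block).  With `Q` (resp. `R`) the block of `σ` containing `k` (resp. `*`):
if `|σ| = 1` then `b = (N−j)/N`; if `|σ| = 2` then `b = −(j+1−|Q|)/N` when `Q = R` and
`b = (N−j)/N` when `Q ≠ R`; if `|σ| = 3` then `b = 0` when `Q = R` and
`b = −(j+1−|Q|−|R|)/N` when `Q ≠ R`; and `b = 0` whenever `|σ| ≥ 4`. -/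
theorem coefficient_b_formula (N : ℝ) (hN : N ≠ 0) (j : ℕ) (hj : 1 ≤ j)
    (star : ℕ) (hstar : star ∉ Finset.Icc 1 j)
    (σ : Finpartition (insert star (Finset.Icc 1 j)))
    (k : ℕ) (hk : k ∈ Finset.Icc 1 j)
    (Q R : Finset ℕ) (hQ : Q ∈ σ.parts) (hkQ : k ∈ Q) (hR : R ∈ σ.parts) (hsR : star ∈ R)
    (b : ℝ)
    (hb : b = ∑ π : Finpartition (insert star (Finset.Icc 1 j)),
      if σ ≤ π then
        ∑ B ∈ π.parts.filter (fun B => k ∈ B ∧ star ∈ B),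
          (-1 : ℝ) ^ (π.parts.card - 1) * (Nat.factorial (π.parts.card - 1) : ℝ) *
            ((N - (B.card : ℝ) + 1) / N)
      else 0) :
    (σ.parts.card = 1 → b = (N - j) / N) ∧
    (σ.parts.card = 2 →
      (Q = R → b = -(((j : ℝ) + 1 - Q.card) / N)) ∧ (Q ≠ R → b = (N - j) / N)) ∧
    (σ.parts.card = 3 →
      (Q = R → b = 0) ∧ (Q ≠ R → b = -(((j : ℝ) + 1 - Q.card - R.card) / N))) ∧
    (4 ≤ σ.parts.card → b = 0) :=
  coefficient_b_formula_general N hN _ j (by simp [hstar]) σ k star Q R hQ hkQ hR hsR b hb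
end

section
/- Let i ≥ 1 be an integer. There exists a constant C, depending only on i, such that for every integer j ≥ 1: Σ_{m=1}^{2i} Σ_{ℓ=1}^{j} Σ_{k=1}^{j} #{ (P,R) : P, R ⊆ [j], |P| = |R| = m, ℓ ∈ P ∪ R ∪ {1,k}, k ∈ P ∪ R ∪ {1,ℓ}, P ⊆ R ∪ {1,ℓ,k}, R ⊆ P ∪ {1,ℓ,k} } ≤ C · j^{2i+1}. -/
/-!
For a counted pair `(P, R)` the symmetric difference `P ∆ R` lies in `{1, ℓ, k}`, while
`2 |P ∪ R| = 2 m + |P ∆ R|`. Hence, apart from `1`, at most `m + 1` labels occur in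
`P ∪ R ∪ {ℓ, k}`: either `ℓ` and `k` already lie in `P ∪ R ∪ {1}` and `2 |P ∪ R| ≤ 2 m + 3`, or
`ℓ = k` is a single new label, which forces `P ∆ R ⊆ {1}`, so that `2 |P ∪ R| ≤ 2 m + 1` and
`|P ∪ R| = m`. There are `O(j ^ (m + 1))` choices for this set of labels, and each of them carries
a number of quadruples `(ℓ, k, P, R)` bounded in terms of `m` alone.
-/

section

open Finset

variable {α : Type*}

/-- The quadruples `(l, k, P, R)` with `l, k ∈ V` and `P, R ⊆ V`, as a nested sigma type so that
its cardinality is an iterated sum over `l` and `k`. -/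
def quadruples (V : Finset α) : Finset (Σ _ : α, Σ _ : α, Finset α × Finset α) :=
  V.sigma fun _ => V.sigma fun _ => V.powerset ×ˢ V.powerset

theorem card_quadruples (V : Finset α) : #(quadruples V) = #V ^ 2 * 4 ^ #V := by
  simp only [quadruples, card_sigma, sum_const, card_product, card_powerset, smul_eq_mul,
    ← mul_pow]
  ring

variable [DecidableEq α]

theorem two_mul_card_union_le_of_subset_union {P R T : Finset α} (hPR : P ⊆ R ∪ T)
    (hRP : R ⊆ P ∪ T) : 2 * #(P ∪ R) ≤ #P + #R + #T := by
  have card_symmDiff : #(symmDiff P R) = #(P \ R) + #(R \ P) :=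
    card_union_of_disjoint disjoint_sdiff_sdiff
  have card_symmDiff_le : #(symmDiff P R) ≤ #T := card_le_card (symmDiff_le hPR hRP)
  have card_left : #(P \ R) + #R = #(P ∪ R) := card_sdiff_add_card P R
  have card_right : #(R \ P) + #P = #(P ∪ R) := union_comm P R ▸ card_sdiff_add_card R P
  omega

/-- The pairs `(P, R)` of `m`-element subsets of `S` counted for given `l` and `k`; the point `a`
plays the role of the distinguished label `1`. -/
def admissiblePairs (S : Finset α) (a : α) (m : ℕ) (l k : α) : Finset (Finset α × Finset α) :=
  (S.powerset ×ˢ S.powerset).filter fun PR =>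
    #PR.1 = m ∧ #PR.2 = m ∧ l ∈ PR.1 ∪ PR.2 ∪ {a, k} ∧ k ∈ PR.1 ∪ PR.2 ∪ {a, l} ∧
      PR.1 ⊆ PR.2 ∪ {a, l, k} ∧ PR.2 ⊆ PR.1 ∪ {a, l, k}

theorem card_erase_le_of_mem_admissiblePairs {S : Finset α} {a l k : α} {m : ℕ}
    {PR : Finset α × Finset α} (h : PR ∈ admissiblePairs S a m l k) :
    #((PR.1 ∪ PR.2 ∪ {l, k}).erase a) ≤ m + 1 := by
  obtain ⟨P, R⟩ := PR
  obtain ⟨-, hP, hR, hl, hk, hPR, hRP⟩ := mem_filter.1 h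
  dsimp only at hP hR hl hk hPR hRP ⊢
  by_cases hlk : l ∈ P ∪ R ∪ {a} ∧ k ∈ P ∪ R ∪ {a}
  · have labels_subset : (P ∪ R ∪ {l, k}).erase a ⊆ P ∪ R := by grind
    have card_labels := card_le_card labels_subset
    have card_union := two_mul_card_union_le_of_subset_union hPR hRP
    have card_diff : #{a, l, k} ≤ 3 := card_le_three
    omega
  · obtain ⟨rfl, hl_new⟩ : l = k ∧ l ∉ P ∪ R := by grind
    have labels_subset : (P ∪ R ∪ {l, l}).erase a ⊆ insert l (P ∪ R) := by grind
    have card_labels := (card_le_card labels_subset).trans (card_insert_le _ _)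
    have hPR' : P ⊆ R ∪ {a} := by grind
    have hRP' : R ⊆ P ∪ {a} := by grind
    have card_union := two_mul_card_union_le_of_subset_union hPR' hRP'
    rw [card_singleton] at card_union
    omega

/-- The subsets of `S` with at most `n` elements, as candidates for the labels other than `a` of a
quadruple `(l, k, P, R)`. -/
def powersetCardLE (n : ℕ) (S : Finset α) : Finset (Finset α) :=
  (range (n + 1)).biUnion fun c => powersetCard c S

theorem mem_powersetCardLE {n : ℕ} {S T : Finset α} :
    T ∈ powersetCardLE n S ↔ T ⊆ S ∧ #T ≤ n := by
  simp [powersetCardLE, and_comm]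

theorem card_powersetCardLE_le {S : Finset α} (hS : S.Nonempty) (n : ℕ) :
    #(powersetCardLE n S) ≤ (n + 1) * #S ^ n := by
  have card_level_le : ∀ c ∈ range (n + 1), #(powersetCard c S) ≤ #S ^ n := fun c hc =>
    calc #(powersetCard c S) = (#S).choose c := card_powersetCard c S
      _ ≤ #S ^ c := Nat.choose_le_pow _ _
      _ ≤ #S ^ n := Nat.pow_le_pow_right hS.card_pos (Nat.lt_succ_iff.1 (mem_range.1 hc))
  simpa only [card_range, powersetCardLE] using card_biUnion_le_card_mul _ _ _ card_level_le

theorem sigma_admissiblePairs_subset (S : Finset α) (a : α) (m : ℕ) :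
    (S.sigma fun l => S.sigma fun k => admissiblePairs S a m l k) ⊆
      (powersetCardLE (m + 1) S).biUnion fun W => quadruples (insert a W) := by
  rintro ⟨l, k, P, R⟩ h
  simp only [mem_sigma] at h
  obtain ⟨hl, hk, hPR⟩ := h
  obtain ⟨hP, hR⟩ := mem_product.1 (mem_filter.1 hPR).1
  set labels := P ∪ R ∪ {l, k}
  have labels_subset : labels ⊆ S := by grind
  have hW : labels.erase a ∈ powersetCardLE (m + 1) S :=
    mem_powersetCardLE.2
      ⟨(erase_subset _ _).trans labels_subset, card_erase_le_of_mem_admissiblePairs hPR⟩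
  refine mem_biUnion.2 ⟨_, hW, ?_⟩
  have subset_insert : labels ⊆ insert a (labels.erase a) := subset_insert_iff.2 subset_rfl
  simp only [quadruples, mem_sigma, mem_product, mem_powerset]
  grind

theorem sum_card_admissiblePairs_le (S : Finset α) (a : α) (m : ℕ) :
    ∑ l ∈ S, ∑ k ∈ S, #(admissiblePairs S a m l k) ≤
      (m + 2) ^ 3 * 4 ^ (m + 2) * #S ^ (m + 1) := by
  obtain rfl | hS := S.eq_empty_or_nonempty
  · simp
  have card_fibre_le : ∀ W ∈ powersetCardLE (m + 1) S,
      #(quadruples (insert a W)) ≤ (m + 2) ^ 2 * 4 ^ (m + 2) := fun W hW => by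
    have card_insert : #(insert a W) ≤ m + 2 :=
      (card_insert_le a W).trans (Nat.succ_le_succ (mem_powersetCardLE.1 hW).2)
    rw [card_quadruples]
    gcongr
    norm_num
  calc ∑ l ∈ S, ∑ k ∈ S, #(admissiblePairs S a m l k)
      = #(S.sigma fun l => S.sigma fun k => admissiblePairs S a m l k) := by
        simp only [card_sigma]
    _ ≤ #((powersetCardLE (m + 1) S).biUnion fun W => quadruples (insert a W)) :=
        card_le_card (sigma_admissiblePairs_subset S a m)
    _ ≤ #(powersetCardLE (m + 1) S) * ((m + 2) ^ 2 * 4 ^ (m + 2)) :=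
        card_biUnion_le_card_mul _ _ _ card_fibre_le
    _ ≤ (m + 2) * #S ^ (m + 1) * ((m + 2) ^ 2 * 4 ^ (m + 2)) :=
        Nat.mul_le_mul_right _ (card_powersetCardLE_le hS (m + 1))
    _ = (m + 2) ^ 3 * 4 ^ (m + 2) * #S ^ (m + 1) := by ring

theorem pair_counting_bound_general (S : Finset α) (a : α) (n : ℕ) :
    ∑ m ∈ Icc 1 n, ∑ l ∈ S, ∑ k ∈ S, #(admissiblePairs S a m l k) ≤
      (∑ m ∈ Icc 1 n, (m + 2) ^ 3 * 4 ^ (m + 2)) * #S ^ (n + 1) := by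
  obtain rfl | hS := S.eq_empty_or_nonempty
  · simp
  rw [sum_mul]
  refine sum_le_sum fun m hm => (sum_card_admissiblePairs_le S a m).trans ?_
  gcongr
  · exact hS.card_pos
  · exact (mem_Icc.1 hm).2

end

/-- Counting bound underlying the optimal-in-`j` remainder estimate: for each `i ≥ 1`
there is a constant `C`, depending only on `i`, such that for all `j ≥ 1`,
`Σ_{m=1}^{2i} Σ_{ℓ=1}^{j} Σ_{k=1}^{j} #{(P,R) : P,R ⊆ [j], |P| = |R| = m,
ℓ ∈ P∪R∪{1,k}, k ∈ P∪R∪{1,ℓ}, P ⊆ R∪{1,ℓ,k}, R ⊆ P∪{1,ℓ,k}} ≤ C·j^{2i+1}`. -/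
theorem pair_counting_bound (i : ℕ) (hi : 1 ≤ i) :
    ∃ C : ℕ, ∀ j : ℕ, 1 ≤ j →
      (∑ m ∈ Finset.Icc 1 (2 * i), ∑ l ∈ Finset.Icc 1 j, ∑ k ∈ Finset.Icc 1 j,
        (((Finset.Icc 1 j).powerset ×ˢ (Finset.Icc 1 j).powerset).filter
          (fun PR => PR.1.card = m ∧ PR.2.card = m ∧
            l ∈ PR.1 ∪ PR.2 ∪ {1, k} ∧ k ∈ PR.1 ∪ PR.2 ∪ {1, l} ∧
            PR.1 ⊆ PR.2 ∪ {1, l, k} ∧ PR.2 ⊆ PR.1 ∪ {1, l, k})).card)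
        ≤ C * j ^ (2 * i + 1) := by
  refine ⟨∑ m ∈ Finset.Icc 1 (2 * i), (m + 2) ^ 3 * 4 ^ (m + 2), fun j _ => ?_⟩
  simpa only [Nat.card_Icc, Nat.add_sub_cancel, admissiblePairs] using
    pair_counting_bound_general (Finset.Icc 1 j) 1 (2 * i)
end
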